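/- Let α ∈ (0,1), let ω_k := (−1)^k C(α,k), let S and θ be real, and let m be a nonnegative integer. Consider the mode ζ_n = (−1)^n (amplification factor ξ = −1). Then the von Neumann recurrence ζ_{m+1} = ζ_m − 4S sin²(θ) Σ_{k=0}^m ω_k ζ_{m−k} holds at step m if and only if S sin²(θ) = 1/(2 Σ_{k=0}^m C(α,k)). -/

import Mathlib

/-- The generalized binomial coefficient `C(α,k) = α(α−1)⋯(α−k+1)/k!`. -/
noncomputable def genBinom (α : ℝ) (k : ℕ) : ℝ :=
  (∏ i ∈ Finset.range k, (α - i)) / (Nat.factorial k)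

/-!
On the mode `ζ n = (-1) ^ n` the memory sum collapses to `(-1) ^ m * s m`, where `s m` is the sum
of `C(α, k)` over `k ≤ m`, so the recurrence at step `m` says `2 = 4 S sin² θ * s m`. It remains to
see that `s m ≠ 0`. The identity `C(α, k) + C(α, k + 1) = C(α, k) (α + 1) / (k + 1)` controls the
two-step increments of `s`. If `α > -1`, then `C(α, k)` never takes two consecutive negative values
and a negative value never outweighs its predecessor, so `s` stays positive. If `α < -1`, the
coefficients alternate in sign and grow in absolute value, so `s m` has the sign of `(-1) ^ m`.
-/

open Finset

section genBinom

variable {α : ℝ}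

@[simp]
theorem genBinom_zero (α : ℝ) : genBinom α 0 = 1 := by
  simp [genBinom]

@[simp]
theorem genBinom_one (α : ℝ) : genBinom α 1 = α := by
  simp [genBinom]

theorem genBinom_succ (α : ℝ) (k : ℕ) :
    genBinom α (k + 1) = genBinom α k * ((α - k) / (k + 1)) := by
  rw [genBinom, genBinom, prod_range_succ, Nat.factorial_succ]
  push_cast
  field_simp

theorem genBinom_add_genBinom_succ (α : ℝ) (k : ℕ) :
    genBinom α k + genBinom α (k + 1) = genBinom α k * ((α + 1) / (k + 1)) := by
  rw [genBinom_succ]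
  field_simp
  ring

theorem genBinom_nonneg_of_le_add_one {k : ℕ} (hk : (k : ℝ) ≤ α + 1) : 0 ≤ genBinom α k := by
  refine div_nonneg (prod_nonneg fun i hi ↦ sub_nonneg.2 ?_) (Nat.cast_nonneg _)
  have hik : (i : ℝ) + 1 ≤ k := mod_cast mem_range.1 hi
  linarith

theorem genBinom_succ_nonneg_of_neg {k : ℕ} (hk : genBinom α k < 0) :
    0 ≤ genBinom α (k + 1) := by
  have hαk : α + 1 < k := not_le.1 fun h ↦ hk.not_ge (genBinom_nonneg_of_le_add_one h)
  rw [genBinom_succ]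
  exact mul_nonneg_of_nonpos_of_nonpos hk.le
    (div_nonpos_of_nonpos_of_nonneg (by linarith) (by positivity))

theorem neg_one_pow_mul_genBinom_nonneg (hα : α ≤ 0) (k : ℕ) :
    0 ≤ (-1) ^ k * genBinom α k := by
  induction k with
  | zero => simp
  | succ k ih =>
    have hratio : 0 ≤ (k - α) / (k + 1) :=
      div_nonneg (sub_nonneg.2 (hα.trans k.cast_nonneg)) (by positivity)
    calc 0 ≤ (-1) ^ k * genBinom α k * ((k - α) / (k + 1)) := mul_nonneg ih hratio
      _ = (-1) ^ (k + 1) * genBinom α (k + 1) := by rw [genBinom_succ]; ring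

theorem sum_range_genBinom_pos (hα : -1 < α) (m : ℕ) :
    0 < ∑ k ∈ range (m + 1), genBinom α k := by
  induction m using Nat.twoStepInduction with
  | zero => simp
  | one => simpa [sum_range_succ] using neg_lt_iff_pos_add'.1 hα
  | more m ih_m ih_succ =>
    rw [sum_range_succ]
    rcases lt_or_ge (genBinom α (m + 1)) 0 with hneg | hnonneg
    · exact add_pos_of_pos_of_nonneg ih_succ (genBinom_succ_nonneg_of_neg hneg)
    · rw [sum_range_succ, add_assoc, genBinom_add_genBinom_succ]
      exact add_pos_of_pos_of_nonneg ih_m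
        (mul_nonneg hnonneg (div_nonneg (by linarith) (by positivity)))

theorem neg_one_pow_mul_sum_range_genBinom_pos (hα : α < -1) (m : ℕ) :
    0 < (-1) ^ m * ∑ k ∈ range (m + 1), genBinom α k := by
  induction m using Nat.twoStepInduction with
  | zero => simp
  | one =>
    rw [sum_range_succ, sum_range_one, genBinom_zero, genBinom_one]
    linarith
  | more m ih_m _ =>
    have hincrement : 0 ≤ (-1) ^ m * (genBinom α (m + 1) + genBinom α (m + 2)) :=
      calc 0 ≤ (-1) ^ (m + 1) * genBinom α (m + 1) * (-(α + 1) / ((m + 1 : ℕ) + 1)) :=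
            mul_nonneg (neg_one_pow_mul_genBinom_nonneg (by linarith) _)
              (div_nonneg (by linarith) (by positivity))
        _ = (-1) ^ m * (genBinom α (m + 1) + genBinom α (m + 2)) := by
            rw [genBinom_add_genBinom_succ]; ring
    calc 0 < (-1) ^ m * ∑ k ∈ range (m + 1), genBinom α k
            + (-1) ^ m * (genBinom α (m + 1) + genBinom α (m + 2)) :=
          add_pos_of_pos_of_nonneg ih_m hincrement
      _ = (-1) ^ (m + 2) * ∑ k ∈ range (m + 2 + 1), genBinom α k := by
          rw [sum_range_succ _ (m + 2), sum_range_succ _ (m + 1)]; ring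

theorem sum_range_genBinom_ne_zero (hα : α ≠ -1) (m : ℕ) :
    ∑ k ∈ range (m + 1), genBinom α k ≠ 0 := by
  rcases hα.lt_or_gt with hlt | hgt
  · exact right_ne_zero_of_mul (neg_one_pow_mul_sum_range_genBinom_pos hlt m).ne'
  · exact (sum_range_genBinom_pos hgt m).ne'

end genBinom

theorem sum_range_neg_one_pow_mul_mul_neg_one_pow_sub {R : Type*} [CommRing R] (b : ℕ → R)
    (m : ℕ) :
    ∑ k ∈ range (m + 1), (-1) ^ k * b k * (-1) ^ (m - k) =
      (-1) ^ m * ∑ k ∈ range (m + 1), b k := by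
  rw [mul_sum]
  refine sum_congr rfl fun k hk ↦ ?_
  rw [mul_right_comm, pow_mul_pow_sub _ (Nat.lt_succ_iff.1 (mem_range.1 hk))]

theorem neg_one_pow_succ_eq_sub_iff {K : Type*} [Field K] [NeZero (2 : K)] {s : K} (hs : s ≠ 0)
    (c : K) (m : ℕ) :
    (-1) ^ (m + 1) = (-1) ^ m - 4 * c * ((-1) ^ m * s) ↔ c = 1 / (2 * s) := by
  have h2 : (2 : K) ≠ 0 := two_ne_zero
  have hfactor : (-1) ^ (m + 1) - ((-1) ^ m - 4 * c * ((-1) ^ m * s)) =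
      2 * (-1) ^ m * (c * (2 * s) - 1) := by ring
  have hunit : 2 * (-1 : K) ^ m ≠ 0 := mul_ne_zero h2 (pow_ne_zero m (neg_ne_zero.2 one_ne_zero))
  rw [← sub_eq_zero, hfactor, mul_eq_zero_iff_left hunit, sub_eq_zero,
    eq_div_iff (mul_ne_zero h2 hs)]

theorem stmt_11_general {α : ℝ} (hα : α ≠ -1) (S θ : ℝ) (m : ℕ)
    {ω : ℕ → ℝ} (hω : ∀ k : ℕ, ω k = (-1) ^ k * genBinom α k)
    {ζ : ℕ → ℝ} (hζ : ∀ n : ℕ, ζ n = (-1) ^ n) :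
    (ζ (m + 1) = ζ m - 4 * S * Real.sin θ ^ 2 *
        ∑ k ∈ range (m + 1), ω k * ζ (m - k)) ↔
    S * Real.sin θ ^ 2 = 1 / (2 * ∑ k ∈ range (m + 1), genBinom α k) := by
  simp only [hω, hζ]
  rw [sum_range_neg_one_pow_mul_mul_neg_one_pow_sub, mul_assoc 4 S]
  exact neg_one_pow_succ_eq_sub_iff (sum_range_genBinom_ne_zero hα m) _ m

theorem stmt_11 (α : ℝ) (h0 : 0 < α) (h1 : α < 1) (S θ : ℝ) (m : ℕ)
    (ω : ℕ → ℝ) (hω : ∀ k : ℕ, ω k = (-1) ^ k * genBinom α k)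
    (ζ : ℕ → ℝ) (hζ : ∀ n : ℕ, ζ n = (-1) ^ n) :
    (ζ (m + 1) = ζ m - 4 * S * Real.sin θ ^ 2 *
        ∑ k ∈ Finset.range (m + 1), ω k * ζ (m - k)) ↔
    S * Real.sin θ ^ 2 = 1 / (2 * ∑ k ∈ Finset.range (m + 1), genBinom α k) :=
  stmt_11_general (neg_one_lt_zero.trans h0).ne' S θ m hω hζ
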